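/- Let r ≥ 1, l ≥ 1 and N ≥ 1 be integers, and let v be a binary string that is the concatenation v = v₁v₂⋯v_N of N blocks each of length l. Then the average advantage of the blocks to the infinite alternating string A_r is at least the advantage of v to A_r: (1/N)·∑_{j=1}^{N} adv(v_j, A_r) ≥ adv(v, A_r). -/

import Mathlib

/-- The length of a longest common subsequence of `x` and `y`. -/
noncomputable def LCS {α : Type*} (x y : List α) : ℕ :=
  sSup {n | ∃ u : List α, u.Sublist x ∧ u.Sublist y ∧ u.length = n}

/-- The contiguous substring of the infinite alternating binary string `A_r = (0^r 1^r)^∞`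
starting at (0-indexed) position `i` and having length `m`. -/
def altSeg (r i m : ℕ) : List Bool :=
  (List.range m).map (fun t => decide (((i + t) / r) % 2 = 1))

/-- Advantage of `a` over `b`: `(3·LCS(a,b) − |a| − |b|) / |a|`. -/
noncomputable def advR (a b : List Bool) : ℝ :=
  (3 * (LCS a b : ℝ) - a.length - b.length) / a.length

/-- Advantage of `a` to the infinite alternating string `A_r`: the supremum of the
advantage of `a` over all finite contiguous substrings of `A_r`. -/
noncomputable def advInf (a : List Bool) (r : ℕ) : ℝ :=
  sSup {x : ℝ | ∃ i m : ℕ, x = advR a (altSeg r i m)}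

theorem altSeg_add (r i m n : ℕ) :
    altSeg r i (m + n) = altSeg r i m ++ altSeg r (i + m) n := by
  simp [altSeg, List.range_add, Function.comp_def, Nat.add_assoc]

theorem altSeg_length (r i m : ℕ) : (altSeg r i m).length = m := by
  simp [altSeg]

theorem LCS_bdd {α : Type*} (x y : List α) :
    BddAbove {n | ∃ u : List α, u.Sublist x ∧ u.Sublist y ∧ u.length = n} := by
  refine ⟨x.length, ?_⟩
  rintro n ⟨u, hx, _, rfl⟩
  exact hx.length_le

theorem le_LCS {α : Type*} {x y u : List α} (hx : u.Sublist x) (hy : u.Sublist y) :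
    u.length ≤ LCS x y :=
  le_csSup (LCS_bdd x y) ⟨u, hx, hy, rfl⟩

theorem exists_LCS {α : Type*} (x y : List α) :
    ∃ u : List α, u.Sublist x ∧ u.Sublist y ∧ u.length = LCS x y :=
  Nat.sSup_mem (s := {n | ∃ u : List α, u.Sublist x ∧ u.Sublist y ∧ u.length = n})
    ⟨0, [], by simp, by simp, rfl⟩ (LCS_bdd x y)

theorem advInf_bdd (a : List Bool) (r : ℕ) (ha : 1 ≤ a.length) :
    BddAbove {x : ℝ | ∃ i m : ℕ, x = advR a (altSeg r i m)} := by
  refine ⟨2, ?_⟩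
  rintro x ⟨i, m, rfl⟩
  obtain ⟨u, hx, _, hu⟩ := exists_LCS a (altSeg r i m)
  have h1 : (LCS a (altSeg r i m) : ℝ) ≤ a.length := by
    rw [← hu]; exact_mod_cast hx.length_le
  have h2 : (1 : ℝ) ≤ a.length := by exact_mod_cast ha
  have h3 : (0 : ℝ) ≤ ((altSeg r i m).length : ℝ) := by positivity
  unfold advR
  rw [div_le_iff₀ (by linarith)]
  linarith

theorem block_bound (a u : List Bool) (r i m : ℕ) (ha : 1 ≤ a.length)
    (h1 : u.Sublist a) (h2 : u.Sublist (altSeg r i m)) :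
    3 * (u.length : ℝ) - a.length - m ≤ a.length * advInf a r := by
  have h : advR a (altSeg r i m) ≤ advInf a r := le_csSup (advInf_bdd a r ha) ⟨i, m, rfl⟩
  have hp : (1 : ℝ) ≤ a.length := by exact_mod_cast ha
  have hu : (u.length : ℝ) ≤ LCS a (altSeg r i m) := by exact_mod_cast le_LCS h1 h2
  unfold advR at h
  rw [div_le_iff₀ (by linarith), altSeg_length] at h
  linarith

theorem blocks_bound (r l : ℕ) (hl : 1 ≤ l) (bs : List (List Bool))
    (hb : ∀ b ∈ bs, b.length = l) (i m : ℕ) (u : List Bool)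
    (h1 : u.Sublist bs.flatten) (h2 : u.Sublist (altSeg r i m)) :
    3 * (u.length : ℝ) - bs.length * l - m ≤ l * (bs.map (fun b => advInf b r)).sum := by
  induction bs generalizing i m u with
  | nil =>
    have : u = [] := by simpa using h1
    subst this
    simp
  | cons b bs ih =>
    rw [List.flatten_cons, List.sublist_append_iff] at h1
    obtain ⟨u1, u2, rfl, hu1, hu2⟩ := h1
    rw [List.append_sublist_iff] at h2
    obtain ⟨c1, c2, hc, hc1, hc2⟩ := h2
    have hm : m = c1.length + c2.length := by
      have := congrArg List.length hc
      simpa [altSeg_length] using this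
    rw [hm, altSeg_add] at hc
    obtain ⟨e1, e2⟩ := List.append_inj hc (by simp [altSeg_length])
    have k1 := block_bound b u1 r i c1.length (by rw [hb b (by simp)]; exact hl) hu1
      (by rw [e1]; exact hc1)
    have k2 := ih (fun b' h => hb b' (by simp [h])) (i + c1.length) c2.length u2 hu2
      (by rw [e2]; exact hc2)
    rw [hb b (by simp)] at k1
    subst hm
    simp only [List.length_append, List.length_cons, List.map_cons, List.sum_cons]
    push_cast
    linarith

theorem stmt10 (r l N : ℕ) (hr : 1 ≤ r) (hl : 1 ≤ l) (hN : 1 ≤ N)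
    (blocks : Fin N → List Bool) (hlen : ∀ j, (blocks j).length = l) :
    advInf ((List.ofFn blocks).flatten) r ≤ (1 / (N : ℝ)) * ∑ j, advInf (blocks j) r := by
  have hb : ∀ b ∈ List.ofFn blocks, b.length = l := by
    intro b hb
    obtain ⟨j, rfl⟩ := (List.mem_ofFn' _ _).1 hb
    exact hlen j
  have hfl : (List.ofFn blocks).flatten.length = N * l := by
    rw [List.length_flatten, List.map_congr_left hb]
    simp [List.sum_ofFn]
  refine csSup_le ⟨_, 0, 0, rfl⟩ ?_
  rintro x ⟨i, m, rfl⟩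
  obtain ⟨u, h1, h2, hu⟩ := exists_LCS (List.ofFn blocks).flatten (altSeg r i m)
  have h := blocks_bound r l hl _ hb i m u h1 h2
  have hs : ((List.ofFn blocks).map (fun b => advInf b r)).sum = ∑ j, advInf (blocks j) r := by
    rw [List.map_ofFn, List.sum_ofFn]; rfl
  rw [hs, List.length_ofFn, hu] at h
  have hN' : (0 : ℝ) < N := by exact_mod_cast hN
  have hl' : (0 : ℝ) < l := by exact_mod_cast hl
  unfold advR
  rw [hfl, altSeg_length, div_le_iff₀ (by push_cast; positivity)]
  push_cast
  refine h.trans (le_of_eq ?_)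
  field_simp
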